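/- Let ξ ≥ 0, b > 0, and let L ≥ 1 be an integer. Define F_G(t) = e^{-ξ} · Σ_{i=0}^∞ (ξ^i/i!) · γ(L+i, t/b)/Γ(L+i) for t ≥ 0. Then lim_{ψ → 0⁺} ψ^{-L} · F_G(ψ) = e^{-ξ}/(b^L · L!). -/

import Mathlib

open Filter

/-- The lower incomplete gamma function `γ(s, x) = ∫₀^x t^{s-1} e^{-t} dt`. -/
noncomputable def lincGamma (s x : ℝ) : ℝ :=
  ∫ t in (0:ℝ)..x, t ^ (s - 1) * Real.exp (-t)

lemma lincGamma_nat (n : ℕ) (x : ℝ) :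
    lincGamma ((n + 1 : ℕ) : ℝ) x = ∫ t in (0:ℝ)..x, t ^ n * Real.exp (-t) := by
  unfold lincGamma
  congr 1
  ext t
  have : (((n + 1 : ℕ) : ℝ) - 1) = (n : ℝ) := by push_cast; ring
  rw [this, Real.rpow_natCast]

lemma lincGamma_upper (n : ℕ) (x : ℝ) (hx : 0 ≤ x) :
    lincGamma ((n + 1 : ℕ) : ℝ) x ≤ x ^ (n + 1) / (n + 1) := by
  rw [lincGamma_nat]
  have h : ∫ t in (0:ℝ)..x, t ^ n = x ^ (n + 1) / (n + 1) := by
    rw [integral_pow]; simp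
  rw [← h]
  apply intervalIntegral.integral_mono_on hx
  · exact Continuous.intervalIntegrable (by fun_prop) _ _
  · exact Continuous.intervalIntegrable (by fun_prop) _ _
  · intro t ht
    have h1 : Real.exp (-t) ≤ 1 := Real.exp_le_one_iff.2 (by linarith [ht.1])
    exact mul_le_of_le_one_right (pow_nonneg ht.1 n) h1

lemma lincGamma_lower (n : ℕ) (x : ℝ) (hx : 0 ≤ x) :
    x ^ (n + 1) / (n + 1) * Real.exp (-x) ≤ lincGamma ((n + 1 : ℕ) : ℝ) x := by
  rw [lincGamma_nat]
  have h : ∫ t in (0:ℝ)..x, t ^ n * Real.exp (-x) = x ^ (n + 1) / (n + 1) * Real.exp (-x) := by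
    rw [intervalIntegral.integral_mul_const, integral_pow]; simp
  rw [← h]
  apply intervalIntegral.integral_mono_on hx
  · exact Continuous.intervalIntegrable (by fun_prop) _ _
  · exact Continuous.intervalIntegrable (by fun_prop) _ _
  · intro t ht
    have h1 : Real.exp (-x) ≤ Real.exp (-t) := Real.exp_le_exp.2 (by linarith [ht.2])
    exact mul_le_mul_of_nonneg_left h1 (pow_nonneg ht.1 n)

lemma ratio_bounds (m : ℕ) (hm : 1 ≤ m) (x : ℝ) (hx : 0 ≤ x) :
    x ^ m / (m.factorial : ℝ) * Real.exp (-x) ≤ lincGamma (m : ℝ) x / Real.Gamma (m : ℝ) ∧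
    lincGamma (m : ℝ) x / Real.Gamma (m : ℝ) ≤ x ^ m / (m.factorial : ℝ) := by
  obtain ⟨n, rfl⟩ : ∃ n, m = n + 1 := ⟨m - 1, by omega⟩
  have hG : Real.Gamma ((n + 1 : ℕ) : ℝ) = n.factorial := by
    rw [Nat.cast_add_one]; exact Real.Gamma_nat_eq_factorial n
  have hp : (0:ℝ) < n.factorial := by exact_mod_cast n.factorial_pos
  have hn : (0:ℝ) < n + 1 := by positivity
  rw [hG, Nat.factorial_succ]
  push_cast
  have hl := lincGamma_lower n x hx
  have hu := lincGamma_upper n x hx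
  push_cast at hl hu
  constructor
  · rw [le_div_iff₀ hp]
    refine le_trans (le_of_eq ?_) hl
    field_simp
  · rw [div_le_iff₀ hp]
    refine le_trans hu (le_of_eq ?_)
    field_simp

/-- Asymptotic outage probability of HARQ-CC: with outage probability
`F_G(ψ) = e^{-ξ} ∑_{i=0}^∞ (ξ^i/i!) γ(L+i, ψ/b)/Γ(L+i)`, one has
`ψ^{-L} F_G(ψ) → e^{-ξ}/(b^L L!)` as `ψ → 0⁺`. -/
theorem harqCC_asymptotic_outage (ξ b : ℝ) (hξ : 0 ≤ ξ) (hb : 0 < b)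
    (L : ℕ) (hL : 1 ≤ L)
    (F : ℝ → ℝ)
    (hF : ∀ t, 0 ≤ t → F t = Real.exp (-ξ) *
      ∑' i : ℕ, ξ ^ i / (Nat.factorial i) * (lincGamma (L + i) (t / b) / Real.Gamma (L + i))) :
    Tendsto (fun ψ : ℝ => ψ ^ (-(L : ℤ)) * F ψ)
      (nhdsWithin 0 (Set.Ioi 0)) (nhds (Real.exp (-ξ) / (b ^ L * Nat.factorial L))) := by
  have hLp : (0:ℝ) < L.factorial := by exact_mod_cast L.factorial_pos
  have key : ∀ ψ : ℝ, 0 < ψ →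
      Real.exp (-ξ) / (b ^ L * Nat.factorial L) * Real.exp (-(ψ / b)) ≤ ψ ^ (-(L : ℤ)) * F ψ ∧
      ψ ^ (-(L : ℤ)) * F ψ ≤
        Real.exp (-ξ) / (b ^ L * Nat.factorial L) * Real.exp (ξ * (ψ / b)) := by
    intro ψ hψ
    obtain ⟨x, hx⟩ : ∃ x, x = ψ / b := ⟨_, rfl⟩
    have hx0 : 0 < x := by rw [hx]; positivity
    have hψx : ψ = x * b := by rw [hx]; field_simp
    rw [hF ψ hψ.le, ← hx]
    set f : ℕ → ℝ := fun i =>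
      ξ ^ i / (Nat.factorial i) * (lincGamma (L + i) x / Real.Gamma (L + i)) with hf
    have hr : ∀ i : ℕ, _ := fun i => ratio_bounds (L + i) (by omega) x hx0.le
    push_cast at hr
    have hf0 : ∀ i, 0 ≤ f i := fun i =>
      mul_nonneg (by positivity) (le_trans (by positivity) (hr i).1)
    have hE : HasSum (fun i : ℕ => x ^ L / L.factorial * ((ξ * x) ^ i / (i.factorial : ℝ)))
        (x ^ L / L.factorial * Real.exp (ξ * x)) := by
      apply HasSum.mul_left
      rw [Real.exp_eq_exp_ℝ]
      exact NormedSpace.expSeries_div_hasSum_exp (ξ * x)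
    have hfu : ∀ i, f i ≤ x ^ L / L.factorial * ((ξ * x) ^ i / (i.factorial : ℝ)) := by
      intro i
      have h1 : x ^ (L + i) / ((L + i).factorial : ℝ) ≤ x ^ (L + i) / (L.factorial : ℝ) := by
        apply div_le_div_of_nonneg_left (by positivity) hLp
        exact_mod_cast Nat.factorial_le (Nat.le_add_right L i)
      calc f i ≤ ξ ^ i / (Nat.factorial i) * (x ^ (L + i) / (L.factorial : ℝ)) :=
            mul_le_mul_of_nonneg_left ((hr i).2.trans h1) (by positivity)
        _ = _ := by rw [pow_add, mul_pow]; ring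
    have hfs : Summable f := Summable.of_nonneg_of_le hf0 hfu hE.summable
    have hU : ∑' i, f i ≤ x ^ L / L.factorial * Real.exp (ξ * x) := by
      rw [← hE.tsum_eq]
      exact hfs.tsum_le_tsum hfu hE.summable
    have hLo : x ^ L / L.factorial * Real.exp (-x) ≤ ∑' i, f i := by
      refine le_trans ?_ (hfs.le_tsum 0 (fun j _ => hf0 j))
      have := (hr 0).1
      simpa [hf] using this
    have hc : ∀ y : ℝ, Real.exp (-ξ) / (b ^ L * Nat.factorial L) * y =
        ψ ^ (-(L : ℤ)) * (Real.exp (-ξ) * (x ^ L / L.factorial * y)) := by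
      intro y
      rw [zpow_neg, zpow_natCast, hψx, mul_pow]
      field_simp
    rw [hc, hc]
    constructor <;> gcongr
  have hlim : ∀ g : ℝ → ℝ, Continuous g → g 0 = 0 →
      Tendsto (fun ψ : ℝ => Real.exp (-ξ) / (b ^ L * Nat.factorial L) * Real.exp (g ψ))
        (nhdsWithin 0 (Set.Ioi 0)) (nhds (Real.exp (-ξ) / (b ^ L * Nat.factorial L))) := by
    intro g hg h0
    have hc : Continuous
        (fun ψ : ℝ => Real.exp (-ξ) / (b ^ L * Nat.factorial L) * Real.exp (g ψ)) := by fun_prop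
    have := hc.tendsto 0
    simp only [h0, Real.exp_zero, mul_one] at this
    exact this.mono_left nhdsWithin_le_nhds
  refine tendsto_of_tendsto_of_tendsto_of_le_of_le'
    (hlim (fun ψ => -(ψ / b)) (by fun_prop) (by simp))
    (hlim (fun ψ => ξ * (ψ / b)) (by fun_prop) (by simp)) ?_ ?_
  · filter_upwards [self_mem_nhdsWithin] with ψ hψ using (key ψ hψ).1
  · filter_upwards [self_mem_nhdsWithin] with ψ hψ using (key ψ hψ).2
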